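/- arXiv:1702.04834 — 2 statements merged into one kernel-verified Lean document; each statement's English description precedes it below -/
import Mathlib

section
/- Theorem 4 (average-case gap bound): Let K and N be positive integers, set N̄ := min(K,N), and let M ∈ [0, N). Define R_YMA(K,N,M) := N̄ if M = 0 and R_YMA(K,N,M) := ((N−M)/M)·(1 − (1 − M/N)^N̄) if M ∈ (0,N); define R^low_avg(K,N,M) := max over ℓ ∈ {1,…,K} of max{ (1 − (1 − 1/N)^ℓ)·(N − ℓM) , (1 − (1 − 1/N)^ℓ)·N − (ℓ(ℓ+1)/(2N))·M }. Then for every real number C such that η(u,v) ≤ C for all u ∈ (0,1] and all v ∈ (0,1/2], it holds that R_YMA(K,N,M) ≤ C·R^low_avg(K,N,M). (Since the average-case rate-memory tradeoff R*_avg(M) satisfies R^low_avg(K,N,M) ≤ R*_avg(M) ≤ R_YMA(K,N,M), this gives R*_avg(M)/R^low_avg(K,N,M) ≤ sup_{u∈(0,1]} sup_{v∈(0,1/2]} η(u,v).) -/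
/-!
Put `t = M / N` and `v = 1 / N`. The achievable rate is the convex function
`∑ i < n, (1 - t) ^ (i + 1)` of `t`, with `n = min K N`. The lines of the second family of lower
bounds form a polygon whose edges `ℓ` and `ℓ + 1` meet at `t = (1 - v) ^ ℓ / (ℓ + 1)`. Since the
polygon is affine along each edge, comparing the rate with it at the endpoints of the edges is
enough. At the vertex `ℓ` the ratio to the polygon of the rate for `n = N`, which dominates that for
all `n ≤ N`, is exactly `η(ℓ / N, 1 / N)`. The endpoint `t = 0` is controlled by the vertex `n`: the
line `n` is parallel to the tangent of the rate at `0` and does not exceed it, so the ratio of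
tangent to line is no larger at `0` than at the vertex, where the rate lies above the tangent.
-/

/-- The function `η(u,v)` from Theorem 4 of the paper. -/
noncomputable def eta (u v : ℝ) : ℝ :=
  ((u + v - v * (1 - v) ^ (u / v)) *
      (1 - (1 - v / (u + v) * (1 - v) ^ (u / v)) ^ (1 / v))) /
    ((1 - v) ^ (u / v) * (1 - (1 + u / 2) * (1 - v) ^ (u / v)))

/-- The Yu–Maddah-Ali–Avestimehr achievable rate for decentralized coded caching
with `K` users, `N` files and cache size `M`. -/
noncomputable def RYMA (K N : ℕ) (M : ℝ) : ℝ :=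
  if M = 0 then (min K N : ℝ)
  else ((N : ℝ) - M) / M * (1 - (1 - M / (N : ℝ)) ^ min K N)

open Finset

/-- The rate of decentralized coded caching as a polynomial in the normalized cache size
`t = M / N`, with `n = min K N`. This form needs no case distinction at `t = 0`. -/
noncomputable def decentralizedRate (n : ℕ) (t : ℝ) : ℝ :=
  ∑ i ∈ range n, (1 - t) ^ (i + 1)

/-- The line `ℓ` of the second family of lower bounds in `R^low_avg`, as a function of the
normalized cache size `t = M / N`, with `v = 1 / N`. -/
noncomputable def lowerLine (v : ℝ) (ℓ : ℕ) (t : ℝ) : ℝ :=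
  (1 - (1 - v) ^ ℓ) / v - ℓ * (ℓ + 1) / 2 * t

/-- The normalized cache size at which the lines `ℓ` and `ℓ + 1` of `lowerLine v` meet. -/
noncomputable def cornerPoint (v : ℝ) (ℓ : ℕ) : ℝ :=
  (1 - v) ^ ℓ / (ℓ + 1)

section DecentralizedRate

variable {n m : ℕ} {t : ℝ}

lemma decentralizedRate_zero_right (n : ℕ) : decentralizedRate n 0 = n := by
  simp [decentralizedRate]

lemma decentralizedRate_one_right (n : ℕ) : decentralizedRate n 1 = 0 := by
  simp [decentralizedRate]

lemma decentralizedRate_eq_div_mul (n : ℕ) (ht : t ≠ 0) :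
    decentralizedRate n t = (1 - t) / t * (1 - (1 - t) ^ n) := by
  have hgeom : ∑ i ∈ range n, (1 - t) ^ i = ((1 - t) ^ n - 1) / (1 - t - 1) :=
    geom_sum_eq (by simpa using ht) n
  simp only [decentralizedRate, pow_succ, ← sum_mul]
  rw [hgeom, sub_sub_cancel_left]
  field_simp
  ring

lemma RYMA_eq_decentralizedRate (K : ℕ) {N : ℕ} (hN : 0 < N) (M : ℝ) :
    RYMA K N M = decentralizedRate (min K N) (M / N) := by
  have hN' : (N : ℝ) ≠ 0 := by positivity
  unfold RYMA
  split_ifs with hM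
  · rw [hM, zero_div, decentralizedRate_zero_right, Nat.cast_min]
  · rw [decentralizedRate_eq_div_mul _ (div_ne_zero hM hN')]
    congr 1
    field_simp

lemma decentralizedRate_mono (hnm : n ≤ m) (ht : t ≤ 1) :
    decentralizedRate n t ≤ decentralizedRate m t :=
  sum_le_sum_of_subset_of_nonneg (range_mono hnm) fun _ _ _ => pow_nonneg (sub_nonneg.2 ht) _

lemma convexOn_decentralizedRate (n : ℕ) : ConvexOn ℝ (Set.Iic 1) (decentralizedRate n) := by
  refine ⟨convex_Iic _, fun x hx y hy a b ha hb hab => ?_⟩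
  simp only [decentralizedRate, smul_eq_mul, mul_sum, ← sum_add_distrib]
  refine sum_le_sum fun i _ => ?_
  have hcomb : 1 - (a * x + b * y) = a * (1 - x) + b * (1 - y) := by linear_combination -hab
  rw [hcomb]
  exact (convexOn_pow (i + 1)).2 (Set.mem_Ici.2 (sub_nonneg.2 hx)) (Set.mem_Ici.2 (sub_nonneg.2 hy))
    ha hb hab

lemma tangent_zero_le_decentralizedRate (n : ℕ) (ht : t ≤ 1) :
    n - n * (n + 1) / 2 * t ≤ decentralizedRate n t := by
  have bernoulli (i : ℕ) : 1 - ((i : ℝ) + 1) * t ≤ (1 - t) ^ (i + 1) := by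
    have h := one_add_mul_le_pow (a := -t) (by linarith) (i + 1)
    push_cast at h
    rw [← sub_eq_add_neg] at h
    linarith
  have htangent : ∑ i ∈ range n, (1 - ((i : ℝ) + 1) * t) = n - n * (n + 1) / 2 * t := by
    induction n with
    | zero => simp
    | succ k ih => rw [sum_range_succ, ih]; push_cast; ring
  exact htangent ▸ sum_le_sum fun i _ => bernoulli i

end DecentralizedRate

section LowerLine

variable {v t : ℝ} {ℓ : ℕ}

lemma concaveOn_const_mul_lowerLine (C v : ℝ) (ℓ : ℕ) {s : Set ℝ} (hs : Convex ℝ s) :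
    ConcaveOn ℝ s fun t => C * lowerLine v ℓ t := by
  refine ⟨hs, fun x _ y _ a b _ _ hab => le_of_eq ?_⟩
  simp only [lowerLine, smul_eq_mul]
  linear_combination C * ((1 - (1 - v) ^ ℓ) / v) * hab

lemma le_const_mul_lowerLine_of_convexOn {f : ℝ → ℝ} {C x y : ℝ} (hf : ConvexOn ℝ (Set.Icc x y) f)
    (hx : f x ≤ C * lowerLine v ℓ x) (hy : f y ≤ C * lowerLine v ℓ y) (ht : t ∈ Set.Icc x y) :
    f t ≤ C * lowerLine v ℓ t := by
  have hdiff := (hf.sub (concaveOn_const_mul_lowerLine C v ℓ hf.1)).le_max_of_mem_Icc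
    (Set.left_mem_Icc.2 (ht.1.trans ht.2)) (Set.right_mem_Icc.2 (ht.1.trans ht.2)) ht
  exact sub_nonpos.1 (hdiff.trans (max_le (sub_nonpos.2 hx) (sub_nonpos.2 hy)))

lemma lowerLine_zero_right_le (hv0 : 0 < v) (hv1 : v ≤ 1) (ℓ : ℕ) : lowerLine v ℓ 0 ≤ ℓ := by
  have bernoulli := one_add_mul_le_pow (a := -v) (by linarith) ℓ
  rw [← sub_eq_add_neg] at bernoulli
  rw [lowerLine, mul_zero, sub_zero, div_le_iff₀ hv0]
  linarith

lemma lowerLine_le_decentralizedRate (hv0 : 0 < v) (hv1 : v ≤ 1) (ht : t ≤ 1) (ℓ : ℕ) :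
    lowerLine v ℓ t ≤ decentralizedRate ℓ t := by
  have hzero := lowerLine_zero_right_le hv0 hv1 ℓ
  have htangent := tangent_zero_le_decentralizedRate ℓ ht
  simp only [lowerLine] at hzero ⊢
  linarith

lemma cornerPoint_zero_right (v : ℝ) : cornerPoint v 0 = 1 := by
  simp [cornerPoint]

lemma cornerPoint_mem_Icc (hv0 : 0 ≤ v) (hv1 : v ≤ 1) (ℓ : ℕ) :
    cornerPoint v ℓ ∈ Set.Icc 0 1 := by
  have hq : 0 ≤ 1 - v := sub_nonneg.2 hv1
  refine ⟨by unfold cornerPoint; positivity, div_le_one_of_le₀ ?_ (by positivity)⟩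
  calc (1 - v) ^ ℓ ≤ 1 := pow_le_one₀ hq (by linarith)
    _ ≤ ℓ + 1 := by linarith [ℓ.cast_nonneg (α := ℝ)]

lemma lowerLine_succ_cornerPoint (hv : v ≠ 0) (ℓ : ℕ) :
    lowerLine v (ℓ + 1) (cornerPoint v ℓ) = lowerLine v ℓ (cornerPoint v ℓ) := by
  unfold lowerLine cornerPoint
  push_cast
  field_simp
  ring

lemma lowerLine_cornerPoint (hv : v ≠ 0) (ℓ : ℕ) :
    lowerLine v ℓ (cornerPoint v ℓ) = (1 - (1 + ℓ * v / 2) * (1 - v) ^ ℓ) / v := by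
  unfold lowerLine cornerPoint
  field_simp
  ring

lemma one_sub_pow_mul_one_add_mul_le_one (hv0 : 0 ≤ v) (hv1 : v ≤ 1) (ℓ : ℕ) :
    (1 - v) ^ ℓ * (1 + ℓ * v) ≤ 1 := by
  have : 0 ≤ 1 - v := sub_nonneg.2 hv1
  calc (1 - v) ^ ℓ * (1 + ℓ * v) ≤ (1 - v) ^ ℓ * (1 + v) ^ ℓ := by
        gcongr
        exact one_add_mul_le_pow (by linarith) ℓ
    _ = (1 - v ^ 2) ^ ℓ := by rw [← mul_pow]; ring
    _ ≤ 1 := pow_le_one₀ (by nlinarith) (by nlinarith)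

lemma lowerLine_cornerPoint_pos (hv0 : 0 < v) (hv1 : v ≤ 1) (hℓ : 0 < ℓ) :
    0 < lowerLine v ℓ (cornerPoint v ℓ) := by
  rw [lowerLine_cornerPoint hv0.ne']
  refine div_pos (sub_pos.2 ?_) hv0
  have hbound := one_sub_pow_mul_one_add_mul_le_one hv0.le hv1 ℓ
  have hℓv : 0 < ℓ * v := by positivity
  rcases (pow_nonneg (sub_nonneg.2 hv1) ℓ).eq_or_lt with hq | hq
  · rw [← hq, mul_zero]
    exact one_pos
  · nlinarith

end LowerLine

section Comparison

variable {v t C : ℝ} {n : ℕ}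

lemma natCast_le_mul_lowerLine_zero (hv0 : 0 < v) (hv1 : v ≤ 1) (ht : t ∈ Set.Icc 0 1)
    (hpos : 0 < lowerLine v n t) (h : decentralizedRate n t ≤ C * lowerLine v n t) :
    n ≤ C * lowerLine v n 0 := by
  have hC : 1 ≤ C := by
    refine le_of_mul_le_mul_right ?_ hpos
    rw [one_mul]
    exact (lowerLine_le_decentralizedRate hv0 hv1 ht.2 n).trans h
  have hdrop : 0 ≤ n * (n + 1) / 2 * t := mul_nonneg (by positivity) ht.1
  have hline : lowerLine v n 0 = lowerLine v n t + n * (n + 1) / 2 * t := by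
    simp only [lowerLine]; ring
  calc (n : ℝ) ≤ decentralizedRate n t + n * (n + 1) / 2 * t :=
        sub_le_iff_le_add.1 (tangent_zero_le_decentralizedRate n ht.2)
    _ ≤ C * lowerLine v n t + C * (n * (n + 1) / 2 * t) :=
        add_le_add h (le_mul_of_one_le_left hdrop hC)
    _ = C * lowerLine v n 0 := by rw [hline, mul_add C (lowerLine v n t)]

lemma exists_le_mul_lowerLine_of_convexOn {f : ℝ → ℝ} (hf : ConvexOn ℝ (Set.Icc 0 1) f)
    (hv0 : 0 < v) (hv1 : v ≤ 1) (hn : 0 < n) (hzero : f 0 ≤ C * lowerLine v n 0)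
    (hcorner : ∀ ℓ ≤ n, f (cornerPoint v ℓ) ≤ C * lowerLine v ℓ (cornerPoint v ℓ))
    (ht : t ∈ Set.Icc 0 1) :
    ∃ ℓ ∈ Icc 1 n, f t ≤ C * lowerLine v ℓ t := by
  have hmem := cornerPoint_mem_Icc hv0.le hv1
  by_contra! habove
  have hleft : ∀ ℓ ≤ n, t ≤ cornerPoint v ℓ := by
    intro ℓ
    induction ℓ with
    | zero => exact fun _ => (cornerPoint_zero_right v).symm ▸ ht.2
    | succ k ih =>
      intro hk
      by_contra! hright
      refine (habove (k + 1) (mem_Icc.2 ⟨by omega, hk⟩)).not_ge ?_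
      refine le_const_mul_lowerLine_of_convexOn
        (hf.subset (Set.Icc_subset_Icc (hmem (k + 1)).1 (hmem k).2) (convex_Icc _ _))
        (hcorner _ hk) ?_ ⟨hright.le, ih (by omega)⟩
      rw [lowerLine_succ_cornerPoint hv0.ne']
      exact hcorner k (by omega)
  exact (habove n (mem_Icc.2 ⟨hn, le_rfl⟩)).not_ge <| le_const_mul_lowerLine_of_convexOn
    (hf.subset (Set.Icc_subset_Icc_right (hmem n).2) (convex_Icc _ _))
    hzero (hcorner n le_rfl) ⟨ht.1, hleft n le_rfl⟩

lemma exists_decentralizedRate_le_mul_lowerLine (hv0 : 0 < v) (hv1 : v ≤ 1) (hn : 0 < n)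
    (hcorner : ∀ ℓ ∈ Icc 1 n, decentralizedRate n (cornerPoint v ℓ) ≤
      C * lowerLine v ℓ (cornerPoint v ℓ))
    (ht : t ∈ Set.Icc 0 1) :
    ∃ ℓ ∈ Icc 1 n, decentralizedRate n t ≤ C * lowerLine v ℓ t := by
  have hconvex := (convexOn_decentralizedRate n).subset Set.Icc_subset_Iic_self (convex_Icc 0 1)
  refine exists_le_mul_lowerLine_of_convexOn hconvex hv0 hv1 hn ?_ ?_ ht
  · rw [decentralizedRate_zero_right]
    exact natCast_le_mul_lowerLine_zero hv0 hv1 (cornerPoint_mem_Icc hv0.le hv1 n)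
      (lowerLine_cornerPoint_pos hv0 hv1 hn) (hcorner n (mem_Icc.2 ⟨hn, le_rfl⟩))
  · intro ℓ hℓ
    rcases ℓ.eq_zero_or_pos with rfl | hpos
    · simp [cornerPoint_zero_right, decentralizedRate_one_right, lowerLine]
    · exact hcorner ℓ (mem_Icc.2 ⟨hpos, hℓ⟩)

end Comparison

section Eta

variable {N ℓ : ℕ} {C : ℝ}

lemma eta_eq_decentralizedRate_div_lowerLine (hN : 2 ≤ N) (ℓ : ℕ) :
    eta (ℓ / N) (1 / N) = decentralizedRate N (cornerPoint (1 / N) ℓ) /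
      lowerLine (1 / N) ℓ (cornerPoint (1 / N) ℓ) := by
  have hN0 : (N : ℝ) ≠ 0 := by positivity
  have hq : (1 - 1 / (N : ℝ)) ^ ℓ ≠ 0 := by
    have hN2 : (2 : ℝ) ≤ N := by exact_mod_cast hN
    have : 1 / (N : ℝ) < 1 := (div_lt_one (by positivity)).2 (by linarith)
    exact pow_ne_zero _ (sub_pos.2 this).ne'
  have hcorner : cornerPoint (1 / N) ℓ ≠ 0 := div_ne_zero hq (by positivity)
  have hexp : (ℓ / N : ℝ) / (1 / N) = ℓ := by field_simp
  have hbase : (1 / N : ℝ) / (ℓ / N + 1 / N) * (1 - 1 / N) ^ ℓ = cornerPoint (1 / N) ℓ := by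
    unfold cornerPoint; field_simp
  rw [eta, hexp, one_div_one_div, Real.rpow_natCast, Real.rpow_natCast, hbase,
    decentralizedRate_eq_div_mul _ hcorner, lowerLine_cornerPoint (by positivity)]
  generalize (1 - cornerPoint (1 / N) ℓ) ^ N = P
  unfold cornerPoint
  generalize (1 - 1 / (N : ℝ)) ^ ℓ = Q at *
  field_simp

lemma one_div_natCast_le_one (N : ℕ) : 1 / (N : ℝ) ≤ 1 :=
  (one_div (N : ℝ)).trans_le (Nat.cast_inv_le_one N)

lemma one_le_eta (hN : 2 ≤ N) (hℓ : ℓ ∈ Icc 1 N) : 1 ≤ eta (ℓ / N) (1 / N) := by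
  obtain ⟨hℓ0, hℓN⟩ := mem_Icc.1 hℓ
  have hv0 : (0 : ℝ) < 1 / N := by positivity
  have hv1 := one_div_natCast_le_one N
  have hcorner := (cornerPoint_mem_Icc hv0.le hv1 ℓ).2
  rw [eta_eq_decentralizedRate_div_lowerLine hN,
    one_le_div (lowerLine_cornerPoint_pos hv0 hv1 hℓ0)]
  exact (lowerLine_le_decentralizedRate hv0 hv1 hcorner ℓ).trans
    (decentralizedRate_mono hℓN hcorner)

lemma decentralizedRate_cornerPoint_le (hC : 1 ≤ C) (hℓ : ℓ ∈ Icc 1 N)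
    (heta : 2 ≤ N → eta (ℓ / N) (1 / N) ≤ C) :
    decentralizedRate N (cornerPoint (1 / N) ℓ) ≤
      C * lowerLine (1 / N) ℓ (cornerPoint (1 / N) ℓ) := by
  obtain ⟨hℓ0, hℓN⟩ := mem_Icc.1 hℓ
  rcases eq_or_ne N 1 with rfl | hN1
  · obtain rfl : ℓ = 1 := by omega
    simpa [cornerPoint, decentralizedRate, lowerLine] using hC
  · have hN2 : 2 ≤ N := by omega
    rw [← div_le_iff₀ (lowerLine_cornerPoint_pos (by positivity) (one_div_natCast_le_one N) hℓ0),
      ← eta_eq_decentralizedRate_div_lowerLine hN2]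
    exact heta hN2

lemma eta_natCast_div_le
    (hC : ∀ u ∈ Set.Ioc (0 : ℝ) 1, ∀ v ∈ Set.Ioc (0 : ℝ) (1 / 2), eta u v ≤ C)
    (hN : 2 ≤ N) (hℓ : ℓ ∈ Icc 1 N) : eta (ℓ / N) (1 / N) ≤ C := by
  obtain ⟨hℓ0, hℓN⟩ := mem_Icc.1 hℓ
  exact hC _ ⟨by positivity, div_le_one_of_le₀ (by exact_mod_cast hℓN) (by positivity)⟩ _
    ⟨by positivity, one_div_le_one_div_of_le two_pos (by exact_mod_cast hN)⟩

lemma one_le_of_eta_le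
    (hC : ∀ u ∈ Set.Ioc (0 : ℝ) 1, ∀ v ∈ Set.Ioc (0 : ℝ) (1 / 2), eta u v ≤ C) : 1 ≤ C :=
  have hmem : 1 ∈ Icc 1 2 := left_mem_Icc.2 one_le_two
  (one_le_eta le_rfl hmem).trans (eta_natCast_div_le hC le_rfl hmem)

end Eta

theorem average_case_gap_general (K N : ℕ) (hK : 0 < K) (hN : 0 < N)
    (M : ℝ) (hM0 : 0 ≤ M) (hMN : M ≤ N) (C : ℝ) (hC1 : 1 ≤ C)
    (hC : 2 ≤ N → ∀ ℓ ∈ Icc 1 (min K N), eta (ℓ / N) (1 / N) ≤ C) :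
    ∃ ℓ ∈ Icc 1 (min K N), RYMA K N M ≤
      C * ((1 - (1 - 1 / (N : ℝ)) ^ ℓ) * (N : ℝ)
        - (ℓ : ℝ) * ((ℓ : ℝ) + 1) / (2 * (N : ℝ)) * M) := by
  have hN' : (0 : ℝ) < N := by positivity
  have hv0 : (0 : ℝ) < 1 / N := by positivity
  have hv1 := one_div_natCast_le_one N
  have hnN := min_le_right K N
  have hcorner : ∀ ℓ ∈ Icc 1 (min K N), decentralizedRate (min K N) (cornerPoint (1 / N) ℓ) ≤
      C * lowerLine (1 / N) ℓ (cornerPoint (1 / N) ℓ) := fun ℓ hℓ =>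
    (decentralizedRate_mono hnN (cornerPoint_mem_Icc hv0.le hv1 ℓ).2).trans
      (decentralizedRate_cornerPoint_le hC1 (Icc_subset_Icc_right hnN hℓ) fun hN2 => hC hN2 ℓ hℓ)
  obtain ⟨ℓ, hℓ, hrate⟩ := exists_decentralizedRate_le_mul_lowerLine hv0 hv1 (lt_min hK hN) hcorner
    (t := M / N) ⟨div_nonneg hM0 hN'.le, (div_le_one hN').2 hMN⟩
  refine ⟨ℓ, hℓ, ?_⟩
  rw [RYMA_eq_decentralizedRate K hN]
  convert hrate using 2
  unfold lowerLine
  field_simp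

/-- **Theorem 4 (average-case gap bound).** For all `K, N ≥ 1` and `M ∈ [0,N)`,
and any constant `C` dominating `η(u,v)` for all `u ∈ (0,1]` and `v ∈ (0,1/2]`,
the YMA achievable rate is at most `C` times the lower bound
`R^low_avg(K,N,M) = max_{ℓ ∈ {1,…,K}} max{(1 − (1−1/N)^ℓ)(N − ℓM),
(1 − (1−1/N)^ℓ)N − (ℓ(ℓ+1)/(2N))M}`. -/
theorem average_case_gap (K N : ℕ) (hK : 0 < K) (hN : 0 < N)
    (M : ℝ) (hM0 : 0 ≤ M) (hMN : M < N)
    (C : ℝ)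
    (hC : ∀ u ∈ Set.Ioc (0 : ℝ) 1, ∀ v ∈ Set.Ioc (0 : ℝ) (1 / 2), eta u v ≤ C) :
    RYMA K N M ≤
      C * (Finset.Icc 1 K).sup'
        (Finset.nonempty_Icc.mpr (by omega))
        (fun ℓ => max ((1 - (1 - 1 / (N : ℝ)) ^ ℓ) * ((N : ℝ) - (ℓ : ℝ) * M))
          ((1 - (1 - 1 / (N : ℝ)) ^ ℓ) * (N : ℝ)
            - (ℓ : ℝ) * ((ℓ : ℝ) + 1) / (2 * (N : ℝ)) * M)) := by
  obtain ⟨ℓ, hℓ, hrate⟩ := average_case_gap_general K N hK hN M hM0 hMN.le C (one_le_of_eta_le hC)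
    fun hN2 _ hℓ => eta_natCast_div_le hC hN2 (Icc_subset_Icc_right (min_le_right K N) hℓ)
  exact hrate.trans <| mul_le_mul_of_nonneg_left
    (le_sup'_of_le _ (Icc_subset_Icc_right (min_le_left K N) hℓ) (le_max_right _ _))
    (zero_le_one.trans (one_le_of_eta_le hC))
end

section
/- Average-case corner-point bound: Let K and N be positive integers with N̄ := min(K,N) ≥ 2, let ℓ ∈ {1,…,N̄−1}, and set M̃_ℓ := (N/(ℓ+1))·(1 − 1/N)^ℓ. Then ((N − M̃_ℓ)/M̃_ℓ)·(1 − (1 − M̃_ℓ/N)^{N̄}) ≤ η(ℓ/N, 1/N) · ( N − (N + ℓ/2)·(1 − 1/N)^ℓ ). -/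
/- At the corner memory point, `η(ℓ/N, 1/N)` is exactly the ratio of the achievable rate with
exponent `N̄ = N` to the converse bound, so for `K ≥ N` the theorem is an equality. For a smaller
`N̄` the rate only decreases. Clearing the ratio needs the converse bound to be nonzero, which
follows from `1 - 1/N ≤ exp (-1/N)` and `1 + ℓ/N ≤ exp (ℓ/N)`. -/

/-- The Yu–Maddah-Ali–Avestimehr achievable rate `R_YMA` for `N` files and cache size `M`, where
`n` stands for `N̄ = min(K, N)`. The parameters are real, so the powers here and below are real
powers. -/
noncomputable def ymaRate (n N M : ℝ) : ℝ :=
  (N - M) / M * (1 - (1 - M / N) ^ n)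

/-- The corner memory point `M̃_ℓ` of the converse bound. -/
noncomputable def cornerMemory (N ℓ : ℝ) : ℝ :=
  N / (ℓ + 1) * (1 - 1 / N) ^ ℓ

/-- The value at the corner memory point `M̃_ℓ` of the piecewise-linear converse lower bound, in
closed form. -/
noncomputable def cornerConverse (N ℓ : ℝ) : ℝ :=
  N - (N + ℓ / 2) * (1 - 1 / N) ^ ℓ

theorem ymaRate_monotone {N M : ℝ} (hM : 0 ≤ M) (hMN : M < N) :
    Monotone fun n ↦ ymaRate n N M := by
  intro m n hmn
  have hN : 0 < N := hM.trans_lt hMN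
  have hbase_pos : 0 < 1 - M / N := sub_pos.2 ((div_lt_one hN).2 hMN)
  have hbase_le_one : 1 - M / N ≤ 1 := sub_le_self 1 (div_nonneg hM hN.le)
  have hprefactor : 0 ≤ (N - M) / M := div_nonneg (sub_nonneg.2 hMN.le) hM
  exact mul_le_mul_of_nonneg_left
    (sub_le_sub_left (Real.rpow_le_rpow_of_exponent_ge hbase_pos hbase_le_one hmn) 1) hprefactor

theorem one_sub_one_div_rpow_le_exp_neg_div {N ℓ : ℝ} (hN : 1 ≤ N) (hℓ : 0 ≤ ℓ) :
    (1 - 1 / N) ^ ℓ ≤ Real.exp (-(ℓ / N)) := by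
  have hbase : 0 ≤ 1 - 1 / N := sub_nonneg.2 (div_le_self zero_le_one hN)
  calc (1 - 1 / N) ^ ℓ ≤ Real.exp (-(1 / N)) ^ ℓ :=
        Real.rpow_le_rpow hbase (Real.one_sub_le_exp_neg _) hℓ
    _ = Real.exp (-(ℓ / N)) := by rw [← Real.exp_mul]; congr 1; ring

theorem add_mul_one_sub_one_div_rpow_le {N ℓ : ℝ} (hN : 1 ≤ N) (hℓ : 0 ≤ ℓ) :
    (N + ℓ) * (1 - 1 / N) ^ ℓ ≤ N := by
  have hbase : 0 ≤ 1 - 1 / N := sub_nonneg.2 (div_le_self zero_le_one hN)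
  calc (N + ℓ) * (1 - 1 / N) ^ ℓ = N * ((ℓ / N + 1) * (1 - 1 / N) ^ ℓ) := by
        field_simp; ring
    _ ≤ N * (Real.exp (ℓ / N) * Real.exp (-(ℓ / N))) := by
        gcongr
        · exact Real.add_one_le_exp _
        · exact one_sub_one_div_rpow_le_exp_neg_div hN hℓ
    _ = N := by rw [← Real.exp_add, add_neg_cancel, Real.exp_zero, mul_one]

theorem cornerConverse_pos {N ℓ : ℝ} (hN : 1 < N) (hℓ : 0 < ℓ) : 0 < cornerConverse N ℓ := by
  have hbase : 0 < 1 - 1 / N := sub_pos.2 ((div_lt_one (zero_lt_one.trans hN)).2 hN)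
  refine sub_pos.2 ?_
  calc (N + ℓ / 2) * (1 - 1 / N) ^ ℓ < (N + ℓ) * (1 - 1 / N) ^ ℓ := by
        gcongr
        exact half_lt_self hℓ
    _ ≤ N := add_mul_one_sub_one_div_rpow_le hN.le hℓ.le

theorem cornerMemory_nonneg {N ℓ : ℝ} (hN : 1 ≤ N) (hℓ : 0 ≤ ℓ) : 0 ≤ cornerMemory N ℓ := by
  have hbase : 0 ≤ 1 - 1 / N := sub_nonneg.2 (div_le_self zero_le_one hN)
  unfold cornerMemory
  positivity

theorem cornerMemory_lt {N ℓ : ℝ} (hN : 1 ≤ N) (hℓ : 0 < ℓ) : cornerMemory N ℓ < N := by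
  have hN₀ : 0 < N := zero_lt_one.trans_le hN
  have hbase : 0 ≤ 1 - 1 / N := sub_nonneg.2 (div_le_self zero_le_one hN)
  have hbase_le_one : 1 - 1 / N ≤ 1 := sub_le_self 1 (one_div_nonneg.2 hN₀.le)
  calc cornerMemory N ℓ ≤ N / (ℓ + 1) :=
        mul_le_of_le_one_right (by positivity) (Real.rpow_le_one hbase hbase_le_one hℓ.le)
    _ < N := div_lt_self hN₀ (lt_add_of_pos_left 1 hℓ)

theorem eta_eq_ymaRate_div_cornerConverse {N ℓ : ℝ} (hN : N ≠ 0) (hℓ : ℓ + 1 ≠ 0) :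
    eta (ℓ / N) (1 / N) = ymaRate N N (cornerMemory N ℓ) / cornerConverse N ℓ := by
  have hexp : ℓ / N / (1 / N) = ℓ := by field_simp
  have hratio : 1 / N / (ℓ / N + 1 / N) = 1 / (ℓ + 1) := by field_simp
  unfold eta ymaRate cornerMemory cornerConverse
  rw [hexp, hratio, one_div_one_div]
  generalize (1 - 1 / N) ^ ℓ = q
  have hfraction : N / (ℓ + 1) * q / N = 1 / (ℓ + 1) * q := by field_simp
  have hprefactor : (N - N / (ℓ + 1) * q) / (N / (ℓ + 1) * q) = (ℓ + 1 - q) / q := by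
    field_simp
  have hconverse : N - (N + ℓ / 2) * q = N * (1 - (1 + ℓ / N / 2) * q) := by field_simp
  rw [hfraction, hprefactor, hconverse]
  generalize 1 - (1 + ℓ / N / 2) * q = d
  generalize 1 - (1 - 1 / (ℓ + 1) * q) ^ N = e
  field_simp

theorem average_case_corner_point_general {n N ℓ : ℝ} (hN : 1 < N) (hℓ : 0 < ℓ) (hn : n ≤ N) :
    ymaRate n N (cornerMemory N ℓ) ≤ eta (ℓ / N) (1 / N) * cornerConverse N ℓ :=
  calc ymaRate n N (cornerMemory N ℓ) ≤ ymaRate N N (cornerMemory N ℓ) :=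
        ymaRate_monotone (cornerMemory_nonneg hN.le hℓ.le) (cornerMemory_lt hN.le hℓ) hn
    _ = eta (ℓ / N) (1 / N) * cornerConverse N ℓ := by
        rw [eta_eq_ymaRate_div_cornerConverse (by positivity) (by positivity),
          div_mul_cancel₀ _ (cornerConverse_pos hN hℓ).ne']

/-- **Average-case corner-point bound.** For `N̄ := min(K,N) ≥ 2`,
`ℓ ∈ {1,…,N̄−1}` and the corner memory point `M̃_ℓ = (N/(ℓ+1))(1−1/N)^ℓ`:
`R_YMA(K,N,M̃_ℓ) = ((N−M̃_ℓ)/M̃_ℓ)(1−(1−M̃_ℓ/N)^{N̄})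
  ≤ η(ℓ/N, 1/N)·(N − (N + ℓ/2)(1 − 1/N)^ℓ)`. -/
theorem average_case_corner_point (K N : ℕ) (hKN : 2 ≤ min K N)
    (ℓ : ℕ) (hℓ1 : 1 ≤ ℓ) (hℓ2 : ℓ ≤ min K N - 1)
    (M : ℝ) (hMdef : M = (N : ℝ) / ((ℓ : ℝ) + 1) * (1 - 1 / (N : ℝ)) ^ ℓ) :
    ((N : ℝ) - M) / M * (1 - (1 - M / (N : ℝ)) ^ min K N) ≤
      eta ((ℓ : ℝ) / (N : ℝ)) (1 / (N : ℝ)) *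
        ((N : ℝ) - ((N : ℝ) + (ℓ : ℝ) / 2) * (1 - 1 / (N : ℝ)) ^ ℓ) := by
  have hN : (1 : ℝ) < N := by exact_mod_cast hKN.trans (min_le_right K N)
  have hn : ((min K N : ℕ) : ℝ) ≤ N := by exact_mod_cast min_le_right K N
  simpa only [hMdef, ymaRate, cornerMemory, cornerConverse, Real.rpow_natCast] using
    average_case_corner_point_general hN (Nat.cast_pos.2 hℓ1) hn
end
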